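/- arXiv:2402.03265 — 8 statements merged into one kernel-verified Lean document; each statement's English description precedes it below -/
import Mathlib

section
/- For all smooth functions u, v : ℝ × ℝ → ℝ, the variational (Euler–Lagrange) derivative of the formal Lagrangian v·𝔈[u] with respect to u, which by the standard formula for a fifth-order Lagrangian equals v·(u_{xxx} + E(t)u_x + Q(t)) − ∂_t v − ∂_x( v·(E(t)u + F(t)u_{xx}) ) + ∂_x²( v·F(t)·u_x ) − ∂_x³( v·(B(t) + u) ) − ∂_x⁵ v, coincides pointwise with the adjoint expression 𝔉*[u,v](t,x) = v Q(t) + (u_x v_{xx} + u_{xx} v_x) F(t) − u v_x E(t) − B(t) v_{xxx} − v_{xxxxx} − u v_{xxx} − 3 u_x v_{xx} − 3 u_{xx} v_x − v_t. In other words, the adjoint equation to the fifth-order KdV equation 𝔈[u]=0 is 𝔉*[u,v]=0. -/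
open Real MeasureTheory

/-- Partial derivative with respect to the first (time) variable. -/
noncomputable def pt (f : ℝ → ℝ → ℝ) (t x : ℝ) : ℝ := deriv (fun s => f s x) t

/-- Partial derivative with respect to the second (space) variable. -/
noncomputable def px (f : ℝ → ℝ → ℝ) (t x : ℝ) : ℝ := deriv (fun y => f t y) x

/-- The fifth-order KdV expression
`𝔈[u] = u_t + u_xxxxx + B u_xxx + u u_xxx + E u u_x + F u_x u_xx + Q u`. -/
noncomputable def KdV (B E F Q : ℝ → ℝ) (u : ℝ → ℝ → ℝ) (t x : ℝ) : ℝ :=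
  pt u t x + px (px (px (px (px u)))) t x + B t * px (px (px u)) t x
    + u t x * px (px (px u)) t x + E t * (u t x * px u t x)
    + F t * (px u t x * px (px u) t x) + Q t * u t x

/-- The adjoint expression
`𝔉*[u,v] = v Q + (u_x v_xx + u_xx v_x) F − u v_x E − B v_xxx − v_xxxxx − u v_xxx
  − 3 u_x v_xx − 3 u_xx v_x − v_t`. -/
noncomputable def KdVAdj (B E F Q : ℝ → ℝ) (u v : ℝ → ℝ → ℝ) (t x : ℝ) : ℝ :=
  v t x * Q t + (px u t x * px (px v) t x + px (px u) t x * px v t x) * F t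
    - u t x * px v t x * E t - B t * px (px (px v)) t x
    - px (px (px (px (px v)))) t x - u t x * px (px (px v)) t x
    - 3 * px u t x * px (px v) t x - 3 * px (px u) t x * px v t x - pt v t x

/-- Derivatives of a smooth function of one variable, written with `HasDerivAt`. -/
theorem smooth_deriv_aux {a : ℝ → ℝ} (ha : ContDiff ℝ (⊤ : ℕ∞) a) :
    ContDiff ℝ (⊤ : ℕ∞) (deriv a) ∧ ∀ y, HasDerivAt a (deriv a y) y := by
  have h := contDiff_infty_iff_deriv.1 ha
  exact ⟨h.2, fun y => (h.1 y).hasDerivAt⟩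

/-- the Euler–Lagrange (variational) derivative of the formal Lagrangian
`v·𝔈[u]` with respect to `u`, computed by the standard formula for a fifth-order
Lagrangian, coincides pointwise with the adjoint expression `𝔉*[u,v]`; i.e. the adjoint
equation to `𝔈[u] = 0` is `𝔉*[u,v] = 0`. -/
theorem adjoint_equation_of_fifth_order_KdV
    (B E F Q : ℝ → ℝ)
    (hB : ContDiff ℝ (⊤ : ℕ∞) B) (hE : ContDiff ℝ (⊤ : ℕ∞) E)
    (hF : ContDiff ℝ (⊤ : ℕ∞) F) (hQ : ContDiff ℝ (⊤ : ℕ∞) Q)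
    (u v : ℝ → ℝ → ℝ)
    (hu : ContDiff ℝ (⊤ : ℕ∞) (Function.uncurry u))
    (hv : ContDiff ℝ (⊤ : ℕ∞) (Function.uncurry v))
    (t x : ℝ) :
    v t x * (px (px (px u)) t x + E t * px u t x + Q t)
      - pt v t x
      - px (fun t x => v t x * (E t * u t x + F t * px (px u) t x)) t x
      + px (px (fun t x => v t x * (F t * px u t x))) t x
      - px (px (px (fun t x => v t x * (B t + u t x)))) t x
      - px (px (px (px (px v)))) t x
    = KdVAdj B E F Q u v t x := by
  have ha : ContDiff ℝ (⊤ : ℕ∞) (u t) :=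
    hu.comp (contDiff_const.prodMk contDiff_id : ContDiff ℝ (⊤ : ℕ∞) (fun y : ℝ => (t, y)))
  have hb : ContDiff ℝ (⊤ : ℕ∞) (v t) :=
    hv.comp (contDiff_const.prodMk contDiff_id : ContDiff ℝ (⊤ : ℕ∞) (fun y : ℝ => (t, y)))
  obtain ⟨ha1, da0⟩ := smooth_deriv_aux ha
  obtain ⟨ha2, da1⟩ := smooth_deriv_aux ha1
  obtain ⟨ha3, da2⟩ := smooth_deriv_aux ha2
  obtain ⟨hb1, db0⟩ := smooth_deriv_aux hb
  obtain ⟨hb2, db1⟩ := smooth_deriv_aux hb1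
  obtain ⟨hb3, db2⟩ := smooth_deriv_aux hb2
  have e1 : px (fun t x => v t x * (E t * u t x + F t * px (px u) t x)) t x
      = deriv (v t) x * (E t * u t x + F t * deriv (deriv (u t)) x)
        + v t x * (E t * deriv (u t) x + F t * deriv (deriv (deriv (u t))) x) :=
    ((db0 x).mul (((da0 x).const_mul (E t)).add ((da2 x).const_mul (F t)))).deriv
  have e2 : px (px (fun t x => v t x * (F t * px u t x))) t x
      = (deriv (deriv (v t)) x * (F t * deriv (u t) x)
          + deriv (v t) x * (F t * deriv (deriv (u t)) x))
        + (deriv (v t) x * (F t * deriv (deriv (u t)) x)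
          + v t x * (F t * deriv (deriv (deriv (u t))) x)) := by
    have h1 : px (fun t x => v t x * (F t * px u t x)) t
        = fun y => deriv (v t) y * (F t * deriv (u t) y)
          + v t y * (F t * deriv (deriv (u t)) y) :=
      funext fun y => ((db0 y).mul ((da1 y).const_mul (F t))).deriv
    change deriv (px (fun t x => v t x * (F t * px u t x)) t) x = _
    rw [h1]
    exact (((db1 x).mul ((da1 x).const_mul (F t))).add
      ((db0 x).mul ((da2 x).const_mul (F t)))).deriv
  have e3 : px (px (px (fun t x => v t x * (B t + u t x)))) t x
      = ((deriv (deriv (deriv (v t))) x * (B t + u t x)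
            + deriv (deriv (v t)) x * deriv (u t) x)
          + (deriv (deriv (v t)) x * deriv (u t) x
            + deriv (v t) x * deriv (deriv (u t)) x))
        + ((deriv (deriv (v t)) x * deriv (u t) x
            + deriv (v t) x * deriv (deriv (u t)) x)
          + (deriv (v t) x * deriv (deriv (u t)) x
            + v t x * deriv (deriv (deriv (u t))) x)) := by
    have h1 : px (fun t x => v t x * (B t + u t x)) t
        = fun y => deriv (v t) y * (B t + u t y) + v t y * deriv (u t) y :=
      funext fun y => ((db0 y).mul ((da0 y).const_add (B t))).deriv
    have h2 : px (px (fun t x => v t x * (B t + u t x))) t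
        = fun y => (deriv (deriv (v t)) y * (B t + u t y) + deriv (v t) y * deriv (u t) y)
          + (deriv (v t) y * deriv (u t) y + v t y * deriv (deriv (u t)) y) := by
      funext y
      change deriv (px (fun t x => v t x * (B t + u t x)) t) y = _
      rw [h1]
      exact (((db1 y).mul ((da0 y).const_add (B t))).add ((db0 y).mul (da1 y))).deriv
    change deriv (px (px (fun t x => v t x * (B t + u t x))) t) x = _
    rw [h2]
    exact ((((db2 x).mul ((da0 x).const_add (B t))).add ((db1 x).mul (da1 x))).add
      (((db1 x).mul (da1 x)).add ((db0 x).mul (da2 x)))).deriv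
  rw [e1, e2, e3]
  have u1 : px u t x = deriv (u t) x := rfl
  have u2 : px (px u) t x = deriv (deriv (u t)) x := rfl
  have u3 : px (px (px u)) t x = deriv (deriv (deriv (u t))) x := rfl
  have v1 : px v t x = deriv (v t) x := rfl
  have v2 : px (px v) t x = deriv (deriv (v t)) x := rfl
  have v3 : px (px (px v)) t x = deriv (deriv (deriv (v t))) x := rfl
  unfold KdVAdj
  rw [u1, u2, u3, v1, v2, v3]
  ring
end

section
/- Let B, E, Q : ℝ → ℝ be smooth, take F(t) ≡ 2, let H : ℝ → ℝ satisfy H' = Q, and let c₁, c₂ ∈ ℝ. For a smooth u : ℝ × ℝ → ℝ define v(t,x) := c₁ e^{2H(t)} u(t,x) + c₂ e^{H(t)}. Then the pointwise identity 𝔉*[u,v](t,x) = −c₁ e^{2H(t)} · 𝔈[u](t,x) holds for all smooth u and all (t,x). In particular, the equation 𝔈[u]=0 with F(t)=2 is nonlinearly self-adjoint with substitution φ = c₁ e^{2∫Q dt} u + c₂ e^{∫Q dt} (and multiplier λ = −c₁ e^{2∫Q dt}). -/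
open Real MeasureTheory

/-- for `F(t) ≡ 2`, with `H' = Q` and the substitution
`v = c₁ e^{2H} u + c₂ e^{H}`, one has the pointwise identity
`𝔉*[u,v] = −c₁ e^{2H} · 𝔈[u]`; hence the equation with `F = 2` is nonlinearly
self-adjoint with `φ = c₁ e^{2∫Q} u + c₂ e^{∫Q}` and multiplier `λ = −c₁ e^{2∫Q}`. -/
theorem nonlinear_self_adjointness_F_eq_two
    (B E Q : ℝ → ℝ)
    (hB : ContDiff ℝ (⊤ : ℕ∞) B) (hE : ContDiff ℝ (⊤ : ℕ∞) E)
    (hQ : ContDiff ℝ (⊤ : ℕ∞) Q)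
    (H : ℝ → ℝ) (hH : ∀ t, HasDerivAt H (Q t) t) (c₁ c₂ : ℝ)
    (u : ℝ → ℝ → ℝ) (hu : ContDiff ℝ (⊤ : ℕ∞) (Function.uncurry u))
    (t x : ℝ) :
    KdVAdj B E (fun _ => 2) Q u
        (fun t x => c₁ * Real.exp (2 * H t) * u t x + c₂ * Real.exp (H t)) t x
      = -(c₁ * Real.exp (2 * H t)) * KdV B E (fun _ => 2) Q u t x := by
  have h1 : px (fun t x => c₁ * Real.exp (2 * H t) * u t x + c₂ * Real.exp (H t))
      = fun t x => c₁ * Real.exp (2 * H t) * px u t x := by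
    funext t x
    simp only [px, deriv_add_const, deriv_const_mul_field]
  have h2 : ∀ w : ℝ → ℝ → ℝ, px (fun t x => c₁ * Real.exp (2 * H t) * w t x)
      = fun t x => c₁ * Real.exp (2 * H t) * px w t x := by
    intro w
    funext t x
    simp only [px, deriv_const_mul_field]
  have h3 : pt (fun t x => c₁ * Real.exp (2 * H t) * u t x + c₂ * Real.exp (H t)) t x
      = c₁ * (Real.exp (2 * H t) * (2 * Q t)) * u t x
        + c₁ * Real.exp (2 * H t) * pt u t x + c₂ * (Real.exp (H t) * Q t) := by
    have hd : DifferentiableAt ℝ (fun s => u s x) t := by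
      have h : Differentiable ℝ (Function.uncurry u) := hu.differentiable (by simp)
      exact (h.comp (differentiable_id.prodMk (differentiable_const x))) t
    exact ((((((hH t).const_mul 2).exp).const_mul c₁).mul hd.hasDerivAt).add
      (((hH t).exp).const_mul c₂)).deriv
  unfold KdVAdj KdV
  rw [h3]
  simp only [h1, h2]
  ring
end

section
/- Equivalence transformations of the class: Let A, B, C, E, F, Q : ℝ → ℝ be smooth with A, C nonvanishing, let k₁, k₂ ∈ ℝ, let R : ℝ → ℝ be smooth, and let α : ℝ → ℝ be a smooth bijection with α'(t) > 0 for all t. Suppose u : ℝ × ℝ → ℝ is smooth and satisfies u_t + A(t) u_{xxxxx} + B(t) u_{xxx} + C(t) u u_{xxx} + E(t) u u_x + F(t) u_x u_{xx} + Q(t) u = 0 everywhere. Define ũ : ℝ × ℝ → ℝ by ũ(α(t), e^{k₁}(x + k₂)) = e^{R(t) + k₁/2} u(t,x), and define coefficient functions by Ã(α(t)) = e^{5k₁} A(t)/α'(t), B̃(α(t)) = e^{3k₁} B(t)/α'(t), C̃(α(t)) = e^{5k₁/2 − R(t)} C(t)/α'(t), Ẽ(α(t)) = e^{k₁/2 −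 R(t)} E(t)/α'(t), F̃(α(t)) = e^{5k₁/2 − R(t)} F(t)/α'(t), Q̃(α(t)) = (Q(t) − R'(t))/α'(t). Then ũ satisfies the equation of the same form: ũ_{t̃} + Ã(t̃) ũ_{x̃x̃x̃x̃x̃} + B̃(t̃) ũ_{x̃x̃x̃} + C̃(t̃) ũ ũ_{x̃x̃x̃} + Ẽ(t̃) ũ ũ_{x̃} + F̃(t̃) ũ_{x̃} ũ_{x̃x̃} + Q̃(t̃) ũ = 0 everywhere. -/
open Real MeasureTheory

/-- The full class of fifth-order KdV equations with time-dependent coefficients and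
linear damping: `u_t + A u_xxxxx + B u_xxx + C u u_xxx + E u u_x + F u_x u_xx + Q u`. -/
noncomputable def KdVfull (A B C E F Q : ℝ → ℝ) (u : ℝ → ℝ → ℝ) (t x : ℝ) : ℝ :=
  pt u t x + A t * px (px (px (px (px u)))) t x + B t * px (px (px u)) t x
    + C t * (u t x * px (px (px u)) t x) + E t * (u t x * px u t x)
    + F t * (px u t x * px (px u) t x) + Q t * u t x

theorem px_transform (k₁ k₂ : ℝ) (α c : ℝ → ℝ) (v v' : ℝ → ℝ → ℝ)
    (h : ∀ t x, v' (α t) (Real.exp k₁ * (x + k₂)) = c t * v t x) (t x : ℝ) :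
    px v' (α t) (Real.exp k₁ * (x + k₂)) = (c t * (Real.exp k₁)⁻¹) * px v t x := by
  have hk := Real.exp_ne_zero k₁
  have h1 : (fun y => v' (α t) y) = fun y => c t * v t ((Real.exp k₁)⁻¹ * y - k₂) := by
    funext y
    rw [← h]
    congr 1
    field_simp
    ring
  have h2 : deriv (fun y => v t ((Real.exp k₁)⁻¹ * y - k₂)) (Real.exp k₁ * (x + k₂))
      = (Real.exp k₁)⁻¹ * deriv (v t) x := by
    have := deriv_comp_mul_left (Real.exp k₁)⁻¹ (fun y => v t (y - k₂))
      (Real.exp k₁ * (x + k₂))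
    rw [this, smul_eq_mul, deriv_comp_sub_const]
    congr 2
    field_simp
    ring
  unfold px
  rw [h1, deriv_const_mul_field, h2]
  ring

theorem inv_hasDerivAt (α : ℝ → ℝ) (hα : Differentiable ℝ α) (hαbij : Function.Bijective α)
    (hα' : ∀ t, 0 < deriv α t) : ∃ β : ℝ → ℝ, (∀ s, α (β s) = s) ∧ (∀ t, β (α t) = t) ∧
      ∀ t, HasDerivAt β (deriv α t)⁻¹ (α t) := by
  have hm : StrictMono α := strictMono_of_deriv_pos hα'
  let e := hm.orderIsoOfSurjective α hαbij.2
  have e1 : ∀ s, α (e.symm s) = s := fun s => e.apply_symm_apply s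
  have e2 : ∀ t, e.symm (α t) = t := fun t => e.symm_apply_apply t
  refine ⟨e.symm, e1, e2, fun t => ?_⟩
  refine HasDerivAt.of_local_left_inverse (f := α) e.symm.continuous.continuousAt ?_
    (hα' t).ne' (Filter.Eventually.of_forall e1)
  rw [e2]
  exact (hα t).hasDerivAt

/-- the equivalence transformation
`t̃ = α(t)`, `x̃ = e^{k₁}(x + k₂)`, `ũ = e^{R(t) + k₁/2} u`, with transformed coefficients
`Ã = e^{5k₁}A/α'`, `B̃ = e^{3k₁}B/α'`, `C̃ = e^{5k₁/2 − R}C/α'`, `Ẽ = e^{k₁/2 − R}E/α'`,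
`F̃ = e^{5k₁/2 − R}F/α'`, `Q̃ = (Q − R')/α'`, maps solutions of the class to solutions of
an equation of the same differential structure. -/
theorem equivalence_transformation_of_class
    (A B C E F Q : ℝ → ℝ)
    (hA : ContDiff ℝ (⊤ : ℕ∞) A) (hB : ContDiff ℝ (⊤ : ℕ∞) B)
    (hC : ContDiff ℝ (⊤ : ℕ∞) C) (hE : ContDiff ℝ (⊤ : ℕ∞) E)
    (hF : ContDiff ℝ (⊤ : ℕ∞) F) (hQ : ContDiff ℝ (⊤ : ℕ∞) Q)
    (hAne : ∀ t, A t ≠ 0) (hCne : ∀ t, C t ≠ 0)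
    (k₁ k₂ : ℝ) (R : ℝ → ℝ) (hR : ContDiff ℝ (⊤ : ℕ∞) R)
    (α : ℝ → ℝ) (hα : ContDiff ℝ (⊤ : ℕ∞) α) (hαbij : Function.Bijective α)
    (hα' : ∀ t, 0 < deriv α t)
    (u : ℝ → ℝ → ℝ) (hu : ContDiff ℝ (⊤ : ℕ∞) (Function.uncurry u))
    (hsol : ∀ t x, KdVfull A B C E F Q u t x = 0)
    (u' : ℝ → ℝ → ℝ) (A' B' C' E' F' Q' : ℝ → ℝ)
    (hu' : ∀ t x, u' (α t) (Real.exp k₁ * (x + k₂)) = Real.exp (R t + k₁ / 2) * u t x)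
    (hA' : ∀ t, A' (α t) = Real.exp (5 * k₁) * A t / deriv α t)
    (hB' : ∀ t, B' (α t) = Real.exp (3 * k₁) * B t / deriv α t)
    (hC' : ∀ t, C' (α t) = Real.exp (5 * k₁ / 2 - R t) * C t / deriv α t)
    (hE' : ∀ t, E' (α t) = Real.exp (k₁ / 2 - R t) * E t / deriv α t)
    (hF' : ∀ t, F' (α t) = Real.exp (5 * k₁ / 2 - R t) * F t / deriv α t)
    (hQ' : ∀ t, Q' (α t) = (Q t - deriv R t) / deriv α t) :
    ∀ t' x', KdVfull A' B' C' E' F' Q' u' t' x' = 0 := by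
  have hne : ((⊤ : ℕ∞) : WithTop ℕ∞) ≠ 0 := by simp
  obtain ⟨β, hβ1, hβ2, hβ⟩ := inv_hasDerivAt α (hα.differentiable hne) hαbij hα'
  intro t' x'
  obtain ⟨t, rfl⟩ := hαbij.2 t'
  obtain ⟨x, rfl⟩ : ∃ x, x' = Real.exp k₁ * (x + k₂) :=
    ⟨(Real.exp k₁)⁻¹ * x' - k₂, by field_simp; ring⟩
  have d1 := px_transform k₁ k₂ α (fun t => Real.exp (R t + k₁ / 2)) u u' hu'
  have d2 := px_transform k₁ k₂ α _ _ _ d1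
  have d3 := px_transform k₁ k₂ α _ _ _ d2
  have d4 := px_transform k₁ k₂ α _ _ _ d3
  have d5 := px_transform k₁ k₂ α _ _ _ d4
  have dt : pt u' (α t) (Real.exp k₁ * (x + k₂)) =
      Real.exp (R t + k₁ / 2) * (deriv R t * u t x + pt u t x) / deriv α t := by
    have hux : Differentiable ℝ (fun s => u s x) := by
      have : ContDiff ℝ (⊤ : ℕ∞) (fun s => Function.uncurry u (s, x)) :=
        hu.comp (contDiff_id.prodMk contDiff_const)
      exact this.differentiable hne
    have hg : HasDerivAt (fun s => Real.exp (R s + k₁ / 2) * u s x)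
        (Real.exp (R t + k₁ / 2) * deriv R t * u t x
          + Real.exp (R t + k₁ / 2) * pt u t x) t :=
      (((hR.differentiable hne t).hasDerivAt.add_const (k₁ / 2)).exp).mul (hux t).hasDerivAt
    have hfun : (fun s => u' s (Real.exp k₁ * (x + k₂))) =
        (fun s => Real.exp (R s + k₁ / 2) * u s x) ∘ β := by
      funext s
      simp only [Function.comp]
      rw [← hu', hβ1]
    have hc := HasDerivAt.comp (α t) (by rw [hβ2]; exact hg) (hβ t)
    unfold pt at hc ⊢
    rw [hfun, hc.deriv]
    field_simp
  have hs := hsol t x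
  unfold KdVfull at hs ⊢
  rw [dt, d1, d2, d3, d5, hu', hA', hB', hC', hE', hF', hQ']
  have ha := (hα' t).ne'
  have x1 : Real.exp (R t + k₁ / 2) = Real.exp (R t) * Real.exp (k₁ / 2) := Real.exp_add _ _
  have x2 : Real.exp k₁ = Real.exp (k₁ / 2) ^ 2 := by
    rw [← Real.exp_nat_mul]; congr 1; push_cast; ring
  have x3 : Real.exp (5 * k₁) = Real.exp (k₁ / 2) ^ 10 := by
    rw [← Real.exp_nat_mul]; congr 1; push_cast; ring
  have x4 : Real.exp (3 * k₁) = Real.exp (k₁ / 2) ^ 6 := by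
    rw [← Real.exp_nat_mul]; congr 1; push_cast; ring
  have x5 : Real.exp (5 * k₁ / 2 - R t) = Real.exp (k₁ / 2) ^ 5 / Real.exp (R t) := by
    rw [← Real.exp_nat_mul, ← Real.exp_sub]; congr 1; push_cast; ring
  have x6 : Real.exp (k₁ / 2 - R t) = Real.exp (k₁ / 2) / Real.exp (R t) := Real.exp_sub _ _
  rw [x5, x6, x3, x4, x1, x2]
  have p1 := Real.exp_ne_zero (k₁ / 2)
  have p2 := Real.exp_ne_zero (R t)
  generalize Real.exp (k₁ / 2) = p at *
  generalize Real.exp (R t) = r at *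
  generalize deriv α t = a at *
  trans (r * p / a) * 0
  · rw [← hs]
    field_simp
    ring
  · ring
end

section
/- Conservation law from the multiplier e^{∫Q}: Let B, E, F, Q : ℝ → ℝ be smooth and let H : ℝ → ℝ satisfy H' = Q. Define the conserved density C¹(t,x) := e^{H(t)} u(t,x) and the flux C²(t,x) := e^{H(t)} ( u_{xxxx} + B(t) u_{xx} + u u_{xx} + ((F(t) − 1)/2) u_x² + (E(t)/2) u² ). Then for every smooth u : ℝ × ℝ → ℝ the pointwise identity ∂_t C¹ + ∂_x C² = e^{H(t)} · 𝔈[u] holds; in particular, if u satisfies 𝔈[u] = 0 everywhere, then ∂_t C¹ + ∂_x C² = 0 everywhere. -/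
open Real MeasureTheory

theorem px_slice_contDiff_base (u : ℝ → ℝ → ℝ)
    (hu : ContDiff ℝ (⊤ : ℕ∞) (Function.uncurry u)) (t : ℝ) :
    ContDiff ℝ (⊤ : ℕ∞) (u t) :=
  hu.comp (contDiff_const.prodMk contDiff_id)

theorem px_slice_contDiff (f : ℝ → ℝ → ℝ)
    (hf : ∀ t, ContDiff ℝ (⊤ : ℕ∞) (f t)) (t : ℝ) :
    ContDiff ℝ (⊤ : ℕ∞) (px f t) :=
  (contDiff_infty_iff_deriv.1 (hf t)).2

theorem px_slice_hasDerivAt (f : ℝ → ℝ → ℝ)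
    (hf : ∀ t, ContDiff ℝ (⊤ : ℕ∞) (f t)) (t x : ℝ) :
    HasDerivAt (fun y => f t y) (px f t x) x :=
  ((hf t).differentiable (by simp) x).hasDerivAt

/-- conservation law from the multiplier `e^{∫Q}`.  With `H' = Q`,
density `C¹ = e^{H} u` and flux
`C² = e^{H}( u_xxxx + B u_xx + u u_xx + ((F−1)/2) u_x² + (E/2) u² )`,
one has `∂_t C¹ + ∂_x C² = e^{H} 𝔈[u]` pointwise; in particular
`∂_t C¹ + ∂_x C² = 0` on solutions of `𝔈[u] = 0`. -/
theorem conservation_law_generic_multiplier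
    (B E F Q : ℝ → ℝ)
    (hB : ContDiff ℝ (⊤ : ℕ∞) B) (hE : ContDiff ℝ (⊤ : ℕ∞) E)
    (hF : ContDiff ℝ (⊤ : ℕ∞) F) (hQ : ContDiff ℝ (⊤ : ℕ∞) Q)
    (H : ℝ → ℝ) (hH : ∀ t, HasDerivAt H (Q t) t)
    (u : ℝ → ℝ → ℝ) (hu : ContDiff ℝ (⊤ : ℕ∞) (Function.uncurry u)) :
    (∀ t x,
      pt (fun t x => Real.exp (H t) * u t x) t x
        + px (fun t x => Real.exp (H t) *
            (px (px (px (px u))) t x + B t * px (px u) t x + u t x * px (px u) t x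
              + ((F t - 1) / 2) * (px u t x) ^ 2 + (E t / 2) * (u t x) ^ 2)) t x
      = Real.exp (H t) * KdV B E F Q u t x)
    ∧ ((∀ t x, KdV B E F Q u t x = 0) →
      ∀ t x,
        pt (fun t x => Real.exp (H t) * u t x) t x
          + px (fun t x => Real.exp (H t) *
              (px (px (px (px u))) t x + B t * px (px u) t x + u t x * px (px u) t x
                + ((F t - 1) / 2) * (px u t x) ^ 2 + (E t / 2) * (u t x) ^ 2)) t x
        = 0) := by
  have key : ∀ t x,
      pt (fun t x => Real.exp (H t) * u t x) t x
        + px (fun t x => Real.exp (H t) *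
            (px (px (px (px u))) t x + B t * px (px u) t x + u t x * px (px u) t x
              + ((F t - 1) / 2) * (px u t x) ^ 2 + (E t / 2) * (u t x) ^ 2)) t x
      = Real.exp (H t) * KdV B E F Q u t x := by
    intro t x
    have h0 := px_slice_contDiff_base u hu
    have h1 := px_slice_contDiff u h0
    have h2 := px_slice_contDiff _ h1
    have h3 := px_slice_contDiff _ h2
    have h4 := px_slice_contDiff _ h3
    have d0 := px_slice_hasDerivAt _ h0 t x
    have d1 := px_slice_hasDerivAt _ h1 t x
    have d2 := px_slice_hasDerivAt _ h2 t x
    have d4 := px_slice_hasDerivAt _ h4 t x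
    have ht : HasDerivAt (fun s => u s x) (pt u t x) t := by
      have hc : ContDiff ℝ (⊤ : ℕ∞) (fun s => u s x) :=
        hu.comp (contDiff_id.prodMk contDiff_const)
      exact (hc.differentiable (by simp) t).hasDerivAt
    have e1 : pt (fun t x => Real.exp (H t) * u t x) t x = _ :=
      ((hH t).exp.mul ht).deriv
    have e2 : px (fun t x => Real.exp (H t) *
            (px (px (px (px u))) t x + B t * px (px u) t x + u t x * px (px u) t x
              + ((F t - 1) / 2) * (px u t x) ^ 2 + (E t / 2) * (u t x) ^ 2)) t x = _ :=
      (((((d4.add (d2.const_mul (B t))).add (d0.mul d2)).add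
        ((d1.pow 2).const_mul ((F t - 1) / 2))).add
        ((d0.pow 2).const_mul (E t / 2))).const_mul (Real.exp (H t))).deriv
    rw [e1, e2]
    unfold KdV
    push_cast
    ring
  exact ⟨key, fun h t x => by rw [key, h, mul_zero]⟩
end

section
/- Conservation law for F(t) = 3 from a multiplier β(t,x): Let B, E, Q : ℝ → ℝ be smooth and take F(t) ≡ 3. Let β : ℝ × ℝ → ℝ be smooth and satisfy, for all (t,x), β_{xxx} = −E(t) β_x and β_t = β Q(t) − B(t) β_{xxx} − β_{xxxxx}. Define the conserved density C¹(t,x) := β u and the flux C²(t,x) := β u_{xxxx} − β_x u_{xxx} + β_{xx} u_{xx} − β_{xxx} u_x + β_{xxxx} u + B(t)( β u_{xx} − β_x u_x + β_{xx} u ) + β( u u_{xx} + u_x² ) + (E(t)/2) β u² − β_x u u_x + (1/2) β_{xx} u². Then for every smooth u : ℝ × ℝ → ℝ the pointwise identity ∂_t C¹ + ∂_x C² = β · 𝔈[u] holds; in particular, if u satisfies 𝔈[u] = 0 everywhere (with F(t) = 3), then ∂_t C¹ + ∂_x C² = 0 everywhere. -/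
open Real MeasureTheory

lemma px_smooth {f : ℝ → ℝ → ℝ} (hf : ∀ t, ContDiff ℝ (⊤ : ℕ∞) (f t)) :
    ∀ t, ContDiff ℝ (⊤ : ℕ∞) (px f t) := fun t =>
  ((contDiff_infty_iff_deriv (f := f t)).1 (hf t)).2

lemma px_hasDerivAt {f : ℝ → ℝ → ℝ} (hf : ∀ t, ContDiff ℝ (⊤ : ℕ∞) (f t)) (t x : ℝ) :
    HasDerivAt (fun y => f t y) (px f t x) x :=
  (((hf t).differentiable (by simp)) x).hasDerivAt

lemma slice_x {f : ℝ → ℝ → ℝ} (hf : ContDiff ℝ (⊤ : ℕ∞) (Function.uncurry f)) (t : ℝ) :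
    ContDiff ℝ (⊤ : ℕ∞) (f t) :=
  hf.comp (contDiff_const.prodMk contDiff_id : ContDiff ℝ (⊤ : ℕ∞) fun y : ℝ => (t, y))

lemma pt_hasDerivAt {f : ℝ → ℝ → ℝ} (hf : ContDiff ℝ (⊤ : ℕ∞) (Function.uncurry f)) (t x : ℝ) :
    HasDerivAt (fun s => f s x) (pt f t x) t := by
  have h : ContDiff ℝ (⊤ : ℕ∞) (fun s => f s x) :=
    hf.comp (contDiff_id.prodMk contDiff_const : ContDiff ℝ (⊤ : ℕ∞) fun s : ℝ => (s, x))
  exact ((h.differentiable (by simp)) t).hasDerivAt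

/-- conservation law for `F ≡ 3` from a multiplier `β(t,x)` satisfying
`β_xxx = −E β_x` and `β_t = β Q − B β_xxx − β_xxxxx`.  With density `C¹ = β u` and flux
`C² = β u_xxxx − β_x u_xxx + β_xx u_xx − β_xxx u_x + β_xxxx u
  + B(β u_xx − β_x u_x + β_xx u) + β(u u_xx + u_x²) + (E/2) β u² − β_x u u_x
  + (1/2) β_xx u²`, one has `∂_t C¹ + ∂_x C² = β 𝔈[u]` pointwise; in particular
`∂_t C¹ + ∂_x C² = 0` on solutions with `F = 3`. -/
theorem conservation_law_F_eq_three
    (B E Q : ℝ → ℝ)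
    (hB : ContDiff ℝ (⊤ : ℕ∞) B) (hE : ContDiff ℝ (⊤ : ℕ∞) E)
    (hQ : ContDiff ℝ (⊤ : ℕ∞) Q)
    (β : ℝ → ℝ → ℝ) (hβ : ContDiff ℝ (⊤ : ℕ∞) (Function.uncurry β))
    (hβ3 : ∀ t x, px (px (px β)) t x = -(E t) * px β t x)
    (hβt : ∀ t x, pt β t x
      = β t x * Q t - B t * px (px (px β)) t x - px (px (px (px (px β)))) t x)
    (u : ℝ → ℝ → ℝ) (hu : ContDiff ℝ (⊤ : ℕ∞) (Function.uncurry u)) :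
    (∀ t x,
      pt (fun t x => β t x * u t x) t x
        + px (fun t x =>
            β t x * px (px (px (px u))) t x - px β t x * px (px (px u)) t x
              + px (px β) t x * px (px u) t x - px (px (px β)) t x * px u t x
              + px (px (px (px β))) t x * u t x
              + B t * (β t x * px (px u) t x - px β t x * px u t x
                  + px (px β) t x * u t x)
              + β t x * (u t x * px (px u) t x + (px u t x) ^ 2)
              + (E t / 2) * β t x * (u t x) ^ 2 - px β t x * (u t x * px u t x)
              + (1 / 2) * px (px β) t x * (u t x) ^ 2) t x
      = β t x * KdV B E (fun _ => 3) Q u t x)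
    ∧ ((∀ t x, KdV B E (fun _ => 3) Q u t x = 0) →
      ∀ t x,
        pt (fun t x => β t x * u t x) t x
          + px (fun t x =>
              β t x * px (px (px (px u))) t x - px β t x * px (px (px u)) t x
                + px (px β) t x * px (px u) t x - px (px (px β)) t x * px u t x
                + px (px (px (px β))) t x * u t x
                + B t * (β t x * px (px u) t x - px β t x * px u t x
                    + px (px β) t x * u t x)
                + β t x * (u t x * px (px u) t x + (px u t x) ^ 2)
                + (E t / 2) * β t x * (u t x) ^ 2 - px β t x * (u t x * px u t x)
                + (1 / 2) * px (px β) t x * (u t x) ^ 2) t x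
          = 0) := by
  refine (fun h => ⟨h, fun h0 t x => by rw [h t x, h0 t x, mul_zero]⟩) ?_
  intro t x
  have sb := slice_x hβ
  have su := slice_x hu
  have b0 := px_hasDerivAt sb t x
  have b1 := px_hasDerivAt (px_smooth sb) t x
  have b2 := px_hasDerivAt (px_smooth (px_smooth sb)) t x
  have b3 := px_hasDerivAt (px_smooth (px_smooth (px_smooth sb))) t x
  have b4 := px_hasDerivAt (px_smooth (px_smooth (px_smooth (px_smooth sb)))) t x
  have u0 := px_hasDerivAt su t x
  have u1 := px_hasDerivAt (px_smooth su) t x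
  have u2 := px_hasDerivAt (px_smooth (px_smooth su)) t x
  have u3 := px_hasDerivAt (px_smooth (px_smooth (px_smooth su))) t x
  have u4 := px_hasDerivAt (px_smooth (px_smooth (px_smooth (px_smooth su)))) t x
  have ht := ((pt_hasDerivAt hβ t x).mul (pt_hasDerivAt hu t x)).deriv
  have hx := ((((((((((b0.mul u4).sub (b1.mul u3)).add (b2.mul u2)).sub (b3.mul u1)).add
    (b4.mul u0)).add ((((b0.mul u2).sub (b1.mul u1)).add (b2.mul u0)).const_mul (B t))).add
    (b0.mul ((u0.mul u2).add (u1.pow 2)))).add ((b0.const_mul (E t / 2)).mul (u0.pow 2))).sub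
    (b1.mul (u0.mul u1))).add ((b2.const_mul (1 / 2)).mul (u0.pow 2))).deriv
  have e1 := hβt t x
  have e3 := hβ3 t x
  rw [pt, px]
  refine (congrArg₂ (· + ·) ht hx).trans ?_
  simp only [KdV, Pi.mul_apply, Pi.add_apply, Pi.sub_apply, Pi.pow_apply]
  rw [e1]
  push_cast
  linear_combination (1 / 2 * u t x ^ 2) * e3
end

section
/- Finite scaling symmetry (exponentiation of the generator with k₂ ≠ 0, k₃ = δ = ρ = 0): Let b, e, q, f ∈ ℝ and on the domain t > 0 take B(t) = b t^{−2/5}, E(t) = e t^{−2/5}, F(t) = f, Q(t) = q/t. Suppose u : (0,∞) × ℝ → ℝ is smooth and satisfies 𝔈[u](t,x) = 0 for all t > 0, x ∈ ℝ. Then for every λ > 0 the function u_λ(t,x) := λ² u(λ⁵ t, λ x) also satisfies 𝔈[u_λ](t,x) = 0 for all t > 0, x ∈ ℝ. -/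
open Real MeasureTheory

theorem px_scale (c a l : ℝ) (g : ℝ → ℝ → ℝ) :
    px (fun t x => c * g (a * t) (l * x)) = fun t x => (c * l) * px g (a * t) (l * x) := by
  funext t x
  simp only [px]
  rw [deriv_const_mul_field, deriv_comp_mul_left l (fun y => g (a * t) y) x, smul_eq_mul]
  ring

theorem pt_scale (c a l : ℝ) (g : ℝ → ℝ → ℝ) :
    pt (fun t x => c * g (a * t) (l * x)) = fun t x => (c * a) * pt g (a * t) (l * x) := by
  funext t x
  simp only [pt]
  rw [deriv_const_mul_field, deriv_comp_mul_left a (fun s => g s (l * x)) t, smul_eq_mul]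
  ring

/-- finite scaling symmetry.  For `B(t) = b t^{−2/5}`, `E(t) = e t^{−2/5}`,
`F(t) = f`, `Q(t) = q/t` on `t > 0`, if `u` solves `𝔈[u] = 0` there, then for every
`λ > 0` so does `u_λ(t,x) = λ² u(λ⁵ t, λ x)`. -/
theorem finite_scaling_symmetry
    (b e q f : ℝ)
    (u : ℝ → ℝ → ℝ)
    (hu : ContDiffOn ℝ (⊤ : ℕ∞) (Function.uncurry u)
      (Set.Ioi (0 : ℝ) ×ˢ (Set.univ : Set ℝ)))
    (hsol : ∀ t > (0 : ℝ), ∀ x : ℝ,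
      KdV (fun t => b * t ^ ((-2 : ℝ) / 5)) (fun t => e * t ^ ((-2 : ℝ) / 5))
        (fun _ => f) (fun t => q / t) u t x = 0) :
    ∀ l > (0 : ℝ), ∀ t > (0 : ℝ), ∀ x : ℝ,
      KdV (fun t => b * t ^ ((-2 : ℝ) / 5)) (fun t => e * t ^ ((-2 : ℝ) / 5))
        (fun _ => f) (fun t => q / t)
        (fun t x => l ^ 2 * u (l ^ 5 * t) (l * x)) t x = 0 := by
  intro l hl t ht x
  have h := hsol (l ^ 5 * t) (by positivity) (l * x)
  have hp : (l ^ 5 * t) ^ ((-2 : ℝ) / 5) = (l ^ 2)⁻¹ * t ^ ((-2 : ℝ) / 5) := by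
    rw [Real.mul_rpow (by positivity) ht.le, ← Real.rpow_natCast l 5, ← Real.rpow_mul hl.le]
    congr 1
    rw [← Real.rpow_natCast l 2, ← Real.rpow_neg hl.le]
    norm_num
  unfold KdV at h ⊢
  simp only [px_scale, pt_scale]
  simp only [hp] at h
  have hl0 : l ≠ 0 := hl.ne'
  have ht0 : t ≠ 0 := ht.ne'
  rw [← mul_zero (l ^ 7), ← h]
  field_simp
end

section
/- Finite symmetry from the generator ∂_t + δ(t)∂_x + σ(t)∂_u (Case 2, F constant; it also covers Case 1, F = 0): Let q, e, f, s₀, ε ∈ ℝ. Take E(t) ≡ e, Q(t) ≡ q, F(t) ≡ f, and let s(t) := s₀ e^{−qt}. Let g : ℝ → ℝ be smooth with g'(t) = e·s(t) for all t, and let B : ℝ → ℝ be smooth with B(t) − B(t − ε) = −s(t) for all t. Suppose u : ℝ × ℝ → ℝ is smooth and satisfies 𝔈[u] = 0 everywhere. Then w(t,x) := u(t − ε, x − g(t)) + s(t) also satisfies 𝔈[w] = 0 everywhere. -/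
open Real MeasureTheory

theorem px_shift (v : ℝ → ℝ → ℝ) (ε : ℝ) (g : ℝ → ℝ) :
    px (fun t x => v (t - ε) (x - g t)) = fun t x => px v (t - ε) (x - g t) := by
  funext t x
  exact deriv_comp_sub_const (f := fun y => v (t - ε) y) (g t) x

theorem px_shift_add (v : ℝ → ℝ → ℝ) (ε : ℝ) (g h : ℝ → ℝ) :
    px (fun t x => v (t - ε) (x - g t) + h t) = fun t x => px v (t - ε) (x - g t) := by
  rw [← px_shift]
  funext t x
  simp only [px, deriv_add_const]

theorem pt_shift_add (u : ℝ → ℝ → ℝ) (hu : Differentiable ℝ (Function.uncurry u))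
    (ε : ℝ) (g h : ℝ → ℝ) (t x g' h' : ℝ) (hg : HasDerivAt g g' t) (hh : HasDerivAt h h' t) :
    pt (fun t x => u (t - ε) (x - g t) + h t) t x
      = pt u (t - ε) (x - g t) - g' * px u (t - ε) (x - g t) + h' := by
  have H := (hu (t - ε, x - g t)).hasFDerivAt
  set L := fderiv ℝ (Function.uncurry u) (t - ε, x - g t) with hL
  have h1 : pt u (t - ε) (x - g t) = L (1, 0) :=
    (H.comp_hasDerivAt (t - ε) (f := fun s => (s, x - g t))
      ((hasDerivAt_id _).prodMk (hasDerivAt_const _ _))).deriv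
  have h2 : px u (t - ε) (x - g t) = L (0, 1) :=
    (H.comp_hasDerivAt (x - g t) (f := fun y => (t - ε, y))
      ((hasDerivAt_const _ _).prodMk (hasDerivAt_id _))).deriv
  have h3 : pt (fun t x => u (t - ε) (x - g t) + h t) t x = L (1, -g') + h' :=
    ((H.comp_hasDerivAt t (f := fun s => (s - ε, x - g s))
      (((hasDerivAt_id t).sub_const ε).prodMk (hg.const_sub x))).add hh).deriv
  have h4 : ((1, -g') : ℝ × ℝ) = (1, 0) - g' • (0, 1) := by simp
  rw [h3, h1, h2, h4, map_sub, map_smul, smul_eq_mul]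

/-- finite symmetry from the generator `∂_t + δ(t)∂_x + σ(t)∂_u`
(Case 2, `F` constant; covering also Case 1 with `F = 0`).  With constants
`E ≡ e`, `Q ≡ q`, `F ≡ f`, `s(t) = s₀ e^{−qt}`, `g' = e·s`, and
`B(t) − B(t − ε) = −s(t)`, if `u` solves `𝔈[u] = 0` then so does
`w(t,x) = u(t − ε, x − g(t)) + s(t)`. -/
theorem finite_symmetry_time_translation_case
    (q e f s₀ ε : ℝ)
    (g : ℝ → ℝ) (hg : ContDiff ℝ (⊤ : ℕ∞) g)
    (hg' : ∀ t, HasDerivAt g (e * (s₀ * Real.exp (-q * t))) t)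
    (B : ℝ → ℝ) (hB : ContDiff ℝ (⊤ : ℕ∞) B)
    (hBshift : ∀ t, B t - B (t - ε) = -(s₀ * Real.exp (-q * t)))
    (u : ℝ → ℝ → ℝ) (hu : ContDiff ℝ (⊤ : ℕ∞) (Function.uncurry u))
    (hsol : ∀ t x, KdV B (fun _ => e) (fun _ => f) (fun _ => q) u t x = 0) :
    ∀ t x, KdV B (fun _ => e) (fun _ => f) (fun _ => q)
      (fun t x => u (t - ε) (x - g t) + s₀ * Real.exp (-q * t)) t x = 0 := by
  intro t x
  have hh : HasDerivAt (fun t => s₀ * Real.exp (-q * t)) (-q * (s₀ * Real.exp (-q * t))) t := by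
    have := (((hasDerivAt_id t).const_mul (-q)).exp).const_mul s₀
    refine this.congr_deriv ?_
    simp only [id]
    ring
  have hp := pt_shift_add u (hu.differentiable (by simp)) ε g _ t x _ _ (hg' t) hh
  have hx := px_shift_add u ε g (fun t => s₀ * Real.exp (-q * t))
  have h0 := hsol (t - ε) (x - g t)
  have hb := hBshift t
  unfold KdV at h0 ⊢
  rw [hp, hx]
  simp only [px_shift]
  linear_combination h0 + px (px (px u)) (t - ε) (x - g t) * hb
end

section
/- Conserved integral quantity for F(t) = 2 from the multiplier e^{2∫Q} u: Let B, E, Q : ℝ → ℝ be smooth, take F(t) ≡ 2, and let H : ℝ → ℝ satisfy H' = Q. Suppose u : ℝ × ℝ → ℝ is smooth, satisfies 𝔈[u] = 0 everywhere, and there exists L > 0 such that u(t,x) = 0 whenever |x| ≥ L. Then the function t ↦ ∫_ℝ e^{2H(t)} u(t,x)² dx is constant. -/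
open Real MeasureTheory

lemma aux_px (f : ℝ → ℝ → ℝ) (hf : ContDiff ℝ (⊤ : ℕ∞) (Function.uncurry f)) :
    ContDiff ℝ (⊤ : ℕ∞) (Function.uncurry (px f)) ∧
      ∀ t x, HasDerivAt (fun y => f t y) (px f t x) x := by
  have hd : ∀ t x, HasDerivAt (fun y => f t y)
      (fderiv ℝ (Function.uncurry f) (t, x) (0, 1)) x := by
    intro t x
    have h1 : HasFDerivAt (Function.uncurry f) (fderiv ℝ (Function.uncurry f) (t, x)) (t, x) :=
      (hf.differentiable (by simp) (t, x)).hasFDerivAt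
    have h2 : HasDerivAt (fun y : ℝ => (t, y)) ((0 : ℝ), (1 : ℝ)) x :=
      (hasDerivAt_const x t).prodMk (hasDerivAt_id x)
    exact h1.comp_hasDerivAt x h2
  have he : Function.uncurry (px f) = fun p => fderiv ℝ (Function.uncurry f) p (0, 1) := by
    ext ⟨t, x⟩
    exact (hd t x).deriv
  refine ⟨?_, fun t x => ?_⟩
  · rw [he]
    exact (hf.fderiv_right (m := (⊤ : ℕ∞)) (by simp)).clm_apply contDiff_const
  · have := hd t x
    rwa [← this.deriv] at this

lemma aux_pt (f : ℝ → ℝ → ℝ) (hf : ContDiff ℝ (⊤ : ℕ∞) (Function.uncurry f)) :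
    ContDiff ℝ (⊤ : ℕ∞) (Function.uncurry (pt f)) ∧
      ∀ t x, HasDerivAt (fun s => f s x) (pt f t x) t := by
  have hd : ∀ t x, HasDerivAt (fun s => f s x)
      (fderiv ℝ (Function.uncurry f) (t, x) (1, 0)) t := by
    intro t x
    have h1 : HasFDerivAt (Function.uncurry f) (fderiv ℝ (Function.uncurry f) (t, x)) (t, x) :=
      (hf.differentiable (by simp) (t, x)).hasFDerivAt
    have h2 : HasDerivAt (fun y : ℝ => (y, x)) ((1 : ℝ), (0 : ℝ)) t :=
      (hasDerivAt_id t).prodMk (hasDerivAt_const t x)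
    exact h1.comp_hasDerivAt t h2
  have he : Function.uncurry (pt f) = fun p => fderiv ℝ (Function.uncurry f) p (1, 0) := by
    ext ⟨t, x⟩
    exact (hd t x).deriv
  refine ⟨?_, fun t x => ?_⟩
  · rw [he]
    exact (hf.fderiv_right (m := (⊤ : ℕ∞)) (by simp)).clm_apply contDiff_const
  · have := hd t x
    rwa [← this.deriv] at this

lemma aux_zero (L : ℝ) (f : ℝ → ℝ → ℝ) (h : ∀ t x : ℝ, L < |x| → f t x = 0) :
    ∀ t x : ℝ, L < |x| → px f t x = 0 := by
  intro t x hx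
  have : (fun y => f t y) =ᶠ[nhds x] fun _ => 0 := by
    filter_upwards [(isOpen_lt continuous_const continuous_abs).mem_nhds hx] with y hy
    exact h t y hy
  unfold px
  rw [this.deriv_eq]; simp

lemma aux_leibniz (a b : ℝ) (f f' : ℝ → ℝ → ℝ) (hf : Continuous (Function.uncurry f))
    (hf' : Continuous (Function.uncurry f'))
    (hd : ∀ t x, HasDerivAt (fun s => f s x) (f' t x) t) (t : ℝ) :
    HasDerivAt (fun s => ∫ x in a..b, f s x) (∫ x in a..b, f' t x) t := by
  obtain ⟨C, hC⟩ := (((isCompact_Icc (a := t - 1) (b := t + 1)).prod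
    (isCompact_uIcc (a := a) (b := b))).exists_bound_of_continuousOn hf'.continuousOn)
  have c1 : ∀ s, Continuous (f s) := fun s => hf.comp (by fun_prop : Continuous fun x => (s, x))
  have c2 : ∀ s, Continuous (f' s) := fun s => hf'.comp (by fun_prop : Continuous fun x => (s, x))
  refine (intervalIntegral.hasDerivAt_integral_of_dominated_loc_of_deriv_le
    (F := f) (F' := f') (bound := fun _ => C) (s := Set.Icc (t - 1) (t + 1))
    (Icc_mem_nhds (by linarith) (by linarith)) ?_ ?_ ?_ ?_ ?_ ?_).2
  · exact Filter.Eventually.of_forall fun s => (c1 s).aestronglyMeasurable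
  · exact (c1 t).intervalIntegrable _ _
  · exact (c2 t).aestronglyMeasurable
  · refine Filter.Eventually.of_forall fun x hx s hs => ?_
    exact hC (s, x) ⟨hs, Set.uIoc_subset_uIcc hx⟩
  · exact intervalIntegrable_const
  · exact Filter.Eventually.of_forall fun x hx s hs => hd s x

/-- conserved integral quantity for `F ≡ 2` from the multiplier
`e^{2∫Q} u`.  If `H' = Q`, `u` is a smooth solution of `𝔈[u] = 0` (with `F = 2`)
vanishing for `|x| ≥ L`, then `t ↦ ∫_ℝ e^{2H(t)} u(t,x)² dx` is constant. -/
theorem conserved_integral_F_eq_two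
    (B E Q : ℝ → ℝ)
    (hB : ContDiff ℝ (⊤ : ℕ∞) B) (hE : ContDiff ℝ (⊤ : ℕ∞) E)
    (hQ : ContDiff ℝ (⊤ : ℕ∞) Q)
    (H : ℝ → ℝ) (hH : ∀ t, HasDerivAt H (Q t) t)
    (u : ℝ → ℝ → ℝ) (hu : ContDiff ℝ (⊤ : ℕ∞) (Function.uncurry u))
    (hsol : ∀ t x, KdV B E (fun _ => 2) Q u t x = 0)
    (hsupp : ∃ L > (0 : ℝ), ∀ t x : ℝ, L ≤ |x| → u t x = 0) :
    ∀ t₁ t₂ : ℝ,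
      (∫ x : ℝ, Real.exp (2 * H t₁) * (u t₁ x) ^ 2)
        = ∫ x : ℝ, Real.exp (2 * H t₂) * (u t₂ x) ^ 2 := by
  obtain ⟨L, hL, hz⟩ := hsupp
  obtain ⟨k1, d1⟩ := aux_px u hu
  obtain ⟨k2, d2⟩ := aux_px _ k1
  obtain ⟨k3, d3⟩ := aux_px _ k2
  obtain ⟨k4, d4⟩ := aux_px _ k3
  obtain ⟨k5, d5⟩ := aux_px _ k4
  obtain ⟨kt, dt⟩ := aux_pt u hu
  have z0 : ∀ t x : ℝ, L < |x| → u t x = 0 := fun t x hx => hz t x hx.le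
  have z1 := aux_zero L _ z0
  have z2 := aux_zero L _ z1
  have hHc : Continuous H := continuous_iff_continuousAt.2 fun t => (hH t).continuousAt
  set f : ℝ → ℝ → ℝ := fun t x => Real.exp (2 * H t) * (u t x) ^ 2 with hf
  set f' : ℝ → ℝ → ℝ := fun t x => Real.exp (2 * H t) * (2 * Q t * (u t x) ^ 2
    + 2 * u t x * pt u t x) with hf'
  have uc := hu.continuous
  have utc := kt.continuous
  have Qc := hQ.continuous
  have hfc : Continuous (Function.uncurry f) := by
    have : Function.uncurry f = fun p => Real.exp (2 * H p.1) * (Function.uncurry u p) ^ 2 := rfl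
    rw [this]; fun_prop
  have hfc' : Continuous (Function.uncurry f') := by
    have : Function.uncurry f' = fun p => Real.exp (2 * H p.1) *
      (2 * Q p.1 * (Function.uncurry u p) ^ 2
        + 2 * Function.uncurry u p * Function.uncurry (pt u) p) := rfl
    rw [this]; fun_prop
  have hfd : ∀ t x, HasDerivAt (fun s => f s x) (f' t x) t := by
    intro t x
    have := (((hH t).const_mul 2).exp).mul ((dt t x).pow 2)
    refine this.congr_deriv ?_
    simp only [hf', Pi.pow_apply]
    push_cast
    ring
  have hint : ∀ t, ∫ x, f t x = ∫ x in (-(L+1))..(L+1), f t x := by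
    intro t
    refine (intervalIntegral.integral_eq_integral_of_support_subset ?_).symm
    intro x hx
    by_contra hn
    apply hx
    have : L ≤ |x| := by
      by_contra hlt
      have := abs_lt.1 (not_le.1 hlt)
      exact hn ⟨by linarith, by linarith⟩
    simp [hf, hz t x this]
  have hzero : ∀ t, ∫ x in (-(L+1))..(L+1), f' t x = 0 := by
    intro t
    have hG : ∀ x, HasDerivAt (fun x => -2 * Real.exp (2 * H t) *
        (u t x * px (px (px (px u))) t x - px u t x * px (px (px u)) t x
          + (1/2) * (px (px u) t x) ^ 2
          + B t * (u t x * px (px u) t x - (1/2) * (px u t x) ^ 2)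
          + (u t x) ^ 2 * px (px u) t x + E t / 3 * (u t x) ^ 3)) (f' t x) x := by
      intro x
      have := ((((((((d1 t x).mul (d5 t x)).sub ((d2 t x).mul (d4 t x))).add
        (((d3 t x).pow 2).const_mul (1/2))).add
        ((((d1 t x).mul (d3 t x)).sub (((d2 t x).pow 2).const_mul (1/2))).const_mul (B t))).add
        (((d1 t x).pow 2).mul (d3 t x))).add (((d1 t x).pow 3).const_mul (E t / 3))).const_mul
        (-2 * Real.exp (2 * H t)))
      refine this.congr_deriv ?_
      have hs := hsol t x
      unfold KdV at hs
      simp only [hf', Pi.pow_apply]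
      push_cast
      linear_combination (-2 * Real.exp (2 * H t) * u t x) * hs
    have c : Continuous (f' t) := hfc'.comp (by fun_prop : Continuous fun x => (t, x))
    rw [intervalIntegral.integral_eq_sub_of_hasDerivAt (fun x _ => hG x)
      (c.intervalIntegrable _ _)]
    have a1 : L < |L + 1| := by rw [abs_of_pos] <;> linarith
    have a2 : L < |-(L + 1)| := by rwa [abs_neg]
    simp only [z0 t _ a1, z1 t _ a1, z2 t _ a1, z0 t _ a2, z1 t _ a2, z2 t _ a2]
    ring
  have hI : ∀ t, HasDerivAt (fun s => ∫ x in (-(L+1))..(L+1), f s x) 0 t := by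
    intro t
    have := aux_leibniz (-(L+1)) (L+1) f f' hfc hfc' hfd t
    rwa [hzero t] at this
  intro t₁ t₂
  change ∫ x, f t₁ x = ∫ x, f t₂ x
  rw [hint, hint]
  exact is_const_of_deriv_eq_zero (fun t => (hI t).differentiableAt) (fun t => (hI t).deriv) t₁ t₂
end
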